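/- For every p ≥ 0 there exist constants C > 0 and C₁ > 0, depending only on f, D and p, such that for every ν ∈ (0,1] and every ℓ ∈ (C₁ν, 1], the structure function satisfies S_p(ℓ) ≤ C ℓ^p if 0 ≤ p ≤ 1, and S_p(ℓ) ≤ C ℓ if p ≥ 1. -/

import Mathlib

open MeasureTheory Set
open scoped ENNReal

/-- The `L^p` norm (on the circle, i.e. over one period `(0,1]`) of the `m`-th
derivative of a function `v : ℝ → ℝ` (identified with a function on `S¹ = ℝ/ℤ`). -/
noncomputable def sobLp (m : ℕ) (p : ℝ≥0∞) (v : ℝ → ℝ) : ℝ :=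
  (eLpNorm (iteratedDeriv m v) p (volume.restrict (Ioc (0:ℝ) 1))).toReal

/-- `u` is a smooth, space-periodic, zero-mean-value solution of the generalised
Burgers equation `u_t + f'(u) u_x - ν u_xx = 0` with strongly convex `f` and
nonzero initial condition. -/
structure IsBurgersSolution (f : ℝ → ℝ) (σ ν : ℝ) (u : ℝ → ℝ → ℝ) : Prop where
  hf : ContDiff ℝ (⊤ : ℕ∞) f
  hσ : 0 < σ
  hconv : ∀ y, σ ≤ iteratedDeriv 2 f y
  hν : 0 < ν
  hu : ContDiffOn ℝ (⊤ : ℕ∞) (Function.uncurry u) (Ici (0:ℝ) ×ˢ univ)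
  hper : ∀ t x, u t (x + 1) = u t x
  hpde : ∀ t, 0 < t → ∀ x,
    deriv (fun s => u s x) t + deriv f (u t x) * deriv (u t) x
      - ν * deriv (deriv (u t)) x = 0
  hmean : ∀ t, 0 ≤ t → ∫ x in Ioc (0:ℝ) 1, u t x = 0
  hinit : ∃ x, u 0 x ≠ 0

/-- The quantity `D = max(|u₀|₁⁻¹, |u₀|_{1,∞})`. -/
noncomputable def burgersD (u : ℝ → ℝ → ℝ) : ℝ :=
  max (sobLp 0 1 (u 0))⁻¹ (sobLp 1 ⊤ (u 0))

/-- `T₁ = D⁻² C̃⁻¹ / 4`. -/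
noncomputable def burgersT₁ (D Ct : ℝ) : ℝ := (D ^ 2)⁻¹ * Ct⁻¹ / 4

/-- `T₂ = max(3T₁/2, 2Dσ⁻¹)`. -/
noncomputable def burgersT₂ (σ D Ct : ℝ) : ℝ :=
  max (3 / 2 * burgersT₁ D Ct) (2 * D * σ⁻¹)

/-- Time average over `[T₁, T₂]`. -/
noncomputable def timeAvg (T₁ T₂ : ℝ) (A : ℝ → ℝ) : ℝ :=
  (T₂ - T₁)⁻¹ * ∫ t in T₁..T₂, A t

/-- The structure function `S_p(ℓ)`. -/
noncomputable def structFun (T₁ T₂ : ℝ) (u : ℝ → ℝ → ℝ) (p ℓ : ℝ) : ℝ :=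
  timeAvg T₁ T₂ (fun t => ∫ x in Ioc (0:ℝ) 1, |u t (x + ℓ) - u t x| ^ p)

/-!
The estimate is Oleinik's one-sided Lipschitz bound: `∂ₓu` stays below its initial supremum,
uniformly in the viscosity. It follows from a maximum principle for the increments
`u(t, x + h) - u(t, x) - K h`. At a maximum in the interior, the slope of `u` equals `K` both at `x`
and at `x + h`, diffusion can only lower the increment, and so can transport, because the speed
`f'` is nondecreasing and `K ≥ 0`; hence a positive maximum cannot form.

For a periodic function, increments over a step `ℓ` that are at most `K ℓ` have `L¹` norm at most
`2 K ℓ`, since their mean is zero, and they are bounded by `K` in absolute value. The exponents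
`p ≤ 1` then follow from Jensen's inequality, and the exponents `p ≥ 1` by interpolation between
`L¹` and `L^∞`.
-/

open Filter
open scoped Topology

/-! ### Calculus and integration -/

section Calculus

variable {g : ℝ → ℝ} {x K : ℝ}

lemma deriv_deriv_nonpos_of_isLocalMax (hg : ContinuousAt g x) (h : IsLocalMax g x) :
    deriv (deriv g) x ≤ 0 := by
  -- A positive second derivative would make `x` a local minimum too, so `g` locally constant.
  by_contra! hpos
  have hmin : IsLocalMin g x := isLocalMin_of_deriv_deriv_pos hpos h.deriv_eq_zero hg
  have hconst : g =ᶠ[𝓝 x] fun _ => g x := by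
    filter_upwards [h, hmin] with y hy₁ hy₂ using le_antisymm hy₁ hy₂
  simp [hconst.deriv.deriv_eq] at hpos

lemma deriv_eq_and_deriv_deriv_nonpos_of_isLocalMax_sub_linear (hg : Differentiable ℝ g)
    (h : IsLocalMax (fun y => g y - K * y) x) : deriv g x = K ∧ deriv (deriv g) x ≤ 0 := by
  have hd : deriv (fun y => g y - K * y) = fun y => deriv g y - K := by
    funext y
    simpa using ((hg y).hasDerivAt.fun_sub ((hasDerivAt_id y).const_mul K)).deriv
  have hcont : Continuous fun y => g y - K * y := hg.continuous.sub (by fun_prop)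
  have h₁ := h.deriv_eq_zero
  have h₂ := deriv_deriv_nonpos_of_isLocalMax hcont.continuousAt h
  simp only [hd, deriv_sub_const] at h₁ h₂
  exact ⟨sub_eq_zero.1 h₁, h₂⟩

lemma deriv_eq_and_deriv_deriv_nonneg_of_isLocalMin_sub_linear (hg : Differentiable ℝ g)
    (h : IsLocalMin (fun y => g y - K * y) x) : deriv g x = K ∧ 0 ≤ deriv (deriv g) x := by
  have hmax : IsLocalMax (fun y => (-g) y - -K * y) x := by
    convert! h.neg using 2
    simp only [Pi.neg_apply]
    ring
  simpa [deriv.neg'] using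
    deriv_eq_and_deriv_deriv_nonpos_of_isLocalMax_sub_linear hg.neg hmax

lemma nonneg_of_hasDerivAt_of_isLocalMaxOn_Iic {g' : ℝ} (hg : HasDerivAt g g' x)
    (h : IsLocalMaxOn g (Iic x) x) : 0 ≤ g' := by
  have hcone : (-1 : ℝ) ∈ posTangentConeAt (Iic x) x :=
    mem_posTangentConeAt_of_segment_subset <|
      (convex_Iic x).segment_subset self_mem_Iic (by simp)
  simpa using h.hasFDerivWithinAt_nonpos hg.hasFDerivAt.hasFDerivWithinAt hcone

end Calculus

lemma exists_isMaxOn_prod_univ_of_periodic {X : Type*} [TopologicalSpace X] {s : Set X}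
    (hs : IsCompact s) (hne : s.Nonempty) {φ : X × ℝ → ℝ} (hφ : ContinuousOn φ (s ×ˢ univ))
    {c : ℝ} (hc : 0 < c) (hper : ∀ a ∈ s, Function.Periodic (fun x => φ (a, x)) c) :
    ∃ q ∈ s ×ˢ (univ : Set ℝ), IsMaxOn φ (s ×ˢ univ) q := by
  obtain ⟨q, hq, hmax⟩ := (hs.prod (isCompact_Icc (a := (0 : ℝ)) (b := c))).exists_isMaxOn
    (hne.prod (nonempty_Icc.2 hc.le)) (hφ.mono (prod_mono_right (subset_univ _)))
  refine ⟨q, ⟨hq.1, mem_univ _⟩, fun ⟨a, x⟩ hax => ?_⟩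
  obtain ⟨y, hy, hxy⟩ := (hper a hax.1).exists_mem_Ico₀ hc x
  exact hxy.trans_le (hmax ⟨hax.1, Ico_subset_Icc_self hy⟩)

lemma norm_le_toReal_eLpNorm_top_of_periodic {E : Type*} [NormedAddCommGroup E] {g : ℝ → E}
    {c : ℝ} (hg : Continuous g) (hc : 0 < c) (hper : Function.Periodic g c) (x : ℝ) :
    ‖g x‖ ≤ (eLpNorm g ⊤ (volume.restrict (Ioc 0 c))).toReal := by
  set S := (eLpNorm g ⊤ (volume.restrict (Ioc 0 c))).toReal
  obtain ⟨B, hB⟩ := isCompact_Icc.exists_bound_of_continuousOn (hg.continuousOn (s := Icc 0 c))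
  have hfin : eLpNorm g ⊤ (volume.restrict (Ioc 0 c)) ≠ ⊤ :=
    (eLpNormEssSup_lt_top_of_ae_bound <| (ae_restrict_mem measurableSet_Ioc).mono
      fun y hy => hB y (Ioc_subset_Icc_self hy)).ne
  have hae : (fun y => max ‖g y‖ S) =ᵐ[volume.restrict (Ioc 0 c)] fun _ => S := by
    filter_upwards [ae_le_eLpNormEssSup (f := g) (μ := volume.restrict (Ioc 0 c))] with y hy
    exact max_eq_right (toReal_enorm (g y) ▸ ENNReal.toReal_mono hfin hy)
  have hle : EqOn (fun y => max ‖g y‖ S) (fun _ => S) (Ioc 0 c) :=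
    Measure.eqOn_Ioc_of_ae_eq volume hae (by fun_prop) (by fun_prop)
  obtain ⟨y, hy, hxy⟩ := hper.exists_mem_Ioc hc x 0
  rw [hxy]
  exact max_eq_right_iff.1 (hle (by simpa using hy))

section Moments

variable {Ω : Type*} [MeasurableSpace Ω] {μ : Measure Ω} {w : Ω → ℝ} {p : ℝ}

lemma integral_rpow_le_rpow_integral [IsProbabilityMeasure μ] (hw : Integrable w μ)
    (hw₀ : ∀ x, 0 ≤ w x) (hp₀ : 0 ≤ p) (hp₁ : p ≤ 1) :
    ∫ x, w x ^ p ∂μ ≤ (∫ x, w x ∂μ) ^ p := by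
  have hpow_le (x : Ω) : w x ^ p ≤ 1 + w x := by
    rcases le_total (w x) 1 with h | h
    · linarith [Real.rpow_le_one (hw₀ x) h hp₀, hw₀ x]
    · linarith [Real.rpow_le_self_of_one_le h hp₁]
  have hint : Integrable (fun x => w x ^ p) μ :=
    ((integrable_const 1).add hw).mono'
      ((Real.continuous_rpow_const hp₀).comp_aestronglyMeasurable hw.aestronglyMeasurable)
      (.of_forall fun x => by
        rw [Real.norm_of_nonneg (Real.rpow_nonneg (hw₀ x) p)]
        exact hpow_le x)
  exact (Real.concaveOn_rpow hp₀ hp₁).le_map_integral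
    (Real.continuous_rpow_const hp₀).continuousOn isClosed_Ici (.of_forall hw₀) hw hint

lemma integral_rpow_le_rpow_sub_one_mul_integral {M : ℝ} (hw : Integrable w μ)
    (hw₀ : ∀ x, 0 ≤ w x) (hwM : ∀ x, w x ≤ M) (hp : 1 ≤ p) :
    ∫ x, w x ^ p ∂μ ≤ M ^ (p - 1) * ∫ x, w x ∂μ := by
  rw [← integral_const_mul]
  refine integral_mono_of_nonneg (.of_forall fun x => Real.rpow_nonneg (hw₀ x) p)
    (hw.const_mul _) (.of_forall fun x => ?_)
  calc w x ^ p = w x ^ (p - 1 + 1) := by rw [sub_add_cancel]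
    _ = w x ^ (p - 1) * w x := Real.rpow_add_one' (hw₀ x) (by linarith)
    _ ≤ M ^ (p - 1) * w x := mul_le_mul_of_nonneg_right
        (Real.rpow_le_rpow (hw₀ x) (hwM x) (sub_nonneg.2 hp)) (hw₀ x)

end Moments

lemma timeAvg_le_of_norm_le {T₁ T₂ B : ℝ} {A : ℝ → ℝ} (hT : T₁ < T₂)
    (hA : ∀ t ∈ Ioc T₁ T₂, ‖A t‖ ≤ B) : timeAvg T₁ T₂ A ≤ B := by
  rw [timeAvg, inv_mul_le_iff₀ (sub_pos.2 hT)]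
  have hint := intervalIntegral.norm_integral_le_of_norm_le_const (f := A) (C := B)
    (by rwa [uIoc_of_le hT.le])
  rw [abs_of_pos (sub_pos.2 hT), mul_comm B] at hint
  exact (le_abs_self _).trans hint

/-! ### One-sided Lipschitz functions -/

/-- Oleinik's one-sided Lipschitz condition: the increments of `v` to the right are at most `K`
times the length of the step. For a differentiable `v` this says `v' ≤ K`. -/
def OneSidedLipschitz (K : ℝ) (v : ℝ → ℝ) : Prop :=
  ∀ ⦃x y : ℝ⦄, x ≤ y → v y - v x ≤ K * (y - x)

namespace OneSidedLipschitz

variable {K c h p : ℝ} {v : ℝ → ℝ}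

lemma of_deriv_le (hv : Differentiable ℝ v) (hK : ∀ x, deriv v x ≤ K) : OneSidedLipschitz K v :=
  fun _ _ hxy => image_sub_le_mul_sub_of_deriv_le hv hK hxy

lemma nonneg_of_periodic (hv : OneSidedLipschitz K v) (hc : 0 < c)
    (hper : Function.Periodic v c) : 0 ≤ K := by
  have hstep := hv hc.le
  rw [hper.eq, sub_self, sub_zero] at hstep
  exact nonneg_of_mul_nonneg_left hstep hc

lemma of_increment_le_of_periodic (hK : 0 ≤ K) (hc : 0 < c) (hper : Function.Periodic v c)
    (hv : ∀ x, ∀ h ∈ Icc 0 c, v (x + h) - v x ≤ K * h) : OneSidedLipschitz K v := by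
  intro x y hxy
  obtain ⟨k, hk, hyk⟩ : ∃ k ∈ Ico 0 c, v y = v (x + k) := by
    obtain ⟨z, hz, hyz⟩ := hper.exists_mem_Ico hc y x
    exact ⟨z - x, ⟨by linarith [hz.1], by linarith [hz.2]⟩, by rw [hyz, add_sub_cancel]⟩
  rcases lt_or_ge y (x + c) with hyc | hyc
  · simpa using hv x (y - x) ⟨by linarith, by linarith⟩
  · calc v y - v x ≤ K * k := by simpa [hyk] using hv x k (Ico_subset_Icc_self hk)
      _ ≤ K * (y - x) := mul_le_mul_of_nonneg_left (by linarith [hk.2]) hK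

lemma comp_add_right (hv : OneSidedLipschitz K v) (h : ℝ) :
    OneSidedLipschitz K fun x => v (x + h) := fun x y hxy => by
  simpa using hv (show x + h ≤ y + h by linarith)

lemma antitone_sub_linear (hv : OneSidedLipschitz K v) : Antitone fun x => v x - K * x :=
  fun _ _ hxy => by linarith [hv hxy]

lemma intervalIntegrable (hv : OneSidedLipschitz K v) (a b : ℝ) :
    IntervalIntegrable v volume a b := by
  simpa using hv.antitone_sub_linear.intervalIntegrable.add
    ((continuous_const.mul continuous_id : Continuous fun x : ℝ => K * x).intervalIntegrable a b)

lemma integrableOn_increment (hv : OneSidedLipschitz K v) (hc : 0 ≤ c) (h : ℝ) :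
    IntegrableOn (fun x => v (x + h) - v x) (Ioc 0 c) :=
  (intervalIntegrable_iff_integrableOn_Ioc_of_le hc).1 <|
    ((hv.comp_add_right h).intervalIntegrable 0 c).sub (hv.intervalIntegrable 0 c)

lemma integral_increment_eq_zero (hv : OneSidedLipschitz K v) (hc : 0 ≤ c)
    (hper : Function.Periodic v c) (h : ℝ) : ∫ x in Ioc 0 c, (v (x + h) - v x) = 0 := by
  rw [← intervalIntegral.integral_of_le hc,
    intervalIntegral.integral_sub ((hv.comp_add_right h).intervalIntegrable 0 c)
      (hv.intervalIntegrable 0 c),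
    intervalIntegral.integral_comp_add_right v, sub_eq_zero]
  simpa [add_comm] using hper.intervalIntegral_add_eq h 0

lemma abs_sub_le_of_periodic (hv : OneSidedLipschitz K v) (hc : 0 < c)
    (hper : Function.Periodic v c) (x y : ℝ) : |v y - v x| ≤ K * c := by
  have hK := hv.nonneg_of_periodic hc hper
  have hsub (x y : ℝ) : v y - v x ≤ K * c := by
    obtain ⟨z, hz, hyz⟩ := hper.exists_mem_Ico hc y x
    calc v y - v x ≤ K * (z - x) := hyz ▸ hv hz.1
      _ ≤ K * c := mul_le_mul_of_nonneg_left (by linarith [hz.2]) hK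
  exact abs_sub_le_iff.2 ⟨hsub x y, hsub y x⟩

lemma integral_abs_increment_le (hv : OneSidedLipschitz K v) (hc : 0 < c)
    (hper : Function.Periodic v c) (hh : 0 ≤ h) :
    ∫ x in Ioc 0 c, |v (x + h) - v x| ≤ 2 * K * h * c := by
  have hint := hv.integrableOn_increment hc.le h
  have hKh : 0 ≤ K * h := mul_nonneg (hv.nonneg_of_periodic hc hper) hh
  have habs (x : ℝ) : |v (x + h) - v x| ≤ 2 * K * h - (v (x + h) - v x) := by
    have hincr : v (x + h) - v x ≤ K * h := by simpa using hv (show x ≤ x + h by linarith)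
    exact abs_le.2 ⟨by linarith, by linarith⟩
  calc ∫ x in Ioc 0 c, |v (x + h) - v x|
      ≤ ∫ x in Ioc 0 c, (2 * K * h - (v (x + h) - v x)) :=
        integral_mono hint.abs ((integrable_const _).sub hint) habs
    _ = 2 * K * h * c := by
        rw [integral_sub (integrable_const _) hint, hv.integral_increment_eq_zero hc.le hper]
        simp [hc.le, mul_comm]

lemma integral_abs_increment_rpow_le_of_le_one (hv : OneSidedLipschitz K v)
    (hper : Function.Periodic v 1) (hh : 0 ≤ h) (hp₀ : 0 ≤ p) (hp₁ : p ≤ 1) :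
    ∫ x in Ioc (0 : ℝ) 1, |v (x + h) - v x| ^ p ≤ (2 * K * h) ^ p := by
  have : IsProbabilityMeasure (volume.restrict (Ioc (0 : ℝ) 1)) := ⟨by simp⟩
  calc ∫ x in Ioc (0 : ℝ) 1, |v (x + h) - v x| ^ p
      ≤ (∫ x in Ioc (0 : ℝ) 1, |v (x + h) - v x|) ^ p :=
        integral_rpow_le_rpow_integral (hv.integrableOn_increment zero_le_one h).abs
          (fun _ => abs_nonneg _) hp₀ hp₁
    _ ≤ (2 * K * h) ^ p := Real.rpow_le_rpow (integral_nonneg fun _ => abs_nonneg _)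
        (by simpa using hv.integral_abs_increment_le one_pos hper hh) hp₀

lemma integral_abs_increment_rpow_le_of_one_le (hv : OneSidedLipschitz K v)
    (hper : Function.Periodic v 1) (hh : 0 ≤ h) (hp : 1 ≤ p) :
    ∫ x in Ioc (0 : ℝ) 1, |v (x + h) - v x| ^ p ≤ 2 * K ^ p * h := by
  have hK := hv.nonneg_of_periodic one_pos hper
  calc ∫ x in Ioc (0 : ℝ) 1, |v (x + h) - v x| ^ p
      ≤ K ^ (p - 1) * ∫ x in Ioc (0 : ℝ) 1, |v (x + h) - v x| :=
        integral_rpow_le_rpow_sub_one_mul_integral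
          (hv.integrableOn_increment zero_le_one h).abs (fun _ => abs_nonneg _)
          (fun x => by simpa using hv.abs_sub_le_of_periodic one_pos hper x (x + h)) hp
    _ ≤ K ^ (p - 1) * (2 * K * h) := mul_le_mul_of_nonneg_left
        (by simpa using hv.integral_abs_increment_le one_pos hper hh) (Real.rpow_nonneg hK _)
    _ = 2 * (K ^ (p - 1) * K) * h := by ring
    _ = 2 * K ^ p * h := by
        rw [← Real.rpow_add_one' hK (by linarith), sub_add_cancel]

end OneSidedLipschitz

/-! ### The maximum principle for increments -/

/-- The excess of the increment `u(t, x + h) - u(t, x)` over the barrier `K h + ε t`, as a function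
of `((t, h), x)`. The barrier is strictly increasing in time, so that the maximum principle can be
applied with strict inequalities; `ε` is sent to `0` afterwards. -/
def incrementExcess (u : ℝ → ℝ → ℝ) (K ε : ℝ) (q : (ℝ × ℝ) × ℝ) : ℝ :=
  u q.1.1 (q.2 + q.1.2) - u q.1.1 q.2 - K * q.1.2 - ε * q.1.1

section IncrementExcess

variable {K ε c t h x T : ℝ} {u : ℝ → ℝ → ℝ}

lemma continuousOn_incrementExcess
    (hu : ContinuousOn (Function.uncurry u) (Ici 0 ×ˢ univ)) :
    ContinuousOn (incrementExcess u K ε) ((Icc 0 T ×ˢ Icc 0 c) ×ˢ univ) := by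
  have hshift : ContinuousOn (fun q : (ℝ × ℝ) × ℝ => u q.1.1 (q.2 + q.1.2))
      ((Icc 0 T ×ˢ Icc 0 c) ×ˢ univ) :=
    hu.comp (f := fun q : (ℝ × ℝ) × ℝ => (q.1.1, q.2 + q.1.2)) (by fun_prop)
      fun q hq => ⟨hq.1.1.1, mem_univ _⟩
  have hbase : ContinuousOn (fun q : (ℝ × ℝ) × ℝ => u q.1.1 q.2)
      ((Icc 0 T ×ˢ Icc 0 c) ×ˢ univ) :=
    hu.comp (f := fun q : (ℝ × ℝ) × ℝ => (q.1.1, q.2)) (by fun_prop)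
      fun q hq => ⟨hq.1.1.1, mem_univ _⟩
  exact ((hshift.sub hbase).sub (by fun_prop)).sub (by fun_prop)

lemma exists_isMaxOn_incrementExcess
    (hu : ContinuousOn (Function.uncurry u) (Ici 0 ×ˢ univ)) (hT : 0 ≤ T) (hc : 0 < c)
    (hper : ∀ t, 0 ≤ t → Function.Periodic (u t) c) :
    ∃ q ∈ (Icc 0 T ×ˢ Icc 0 c) ×ˢ univ,
      IsMaxOn (incrementExcess u K ε) ((Icc 0 T ×ˢ Icc 0 c) ×ˢ univ) q := by
  refine exists_isMaxOn_prod_univ_of_periodic (isCompact_Icc.prod isCompact_Icc)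
    ((nonempty_Icc.2 hT).prod (nonempty_Icc.2 hc.le)) (continuousOn_incrementExcess hu) hc ?_
  rintro ⟨t, h⟩ hth x
  simp only [incrementExcess]
  rw [add_right_comm, hper t hth.1.1, hper t hth.1.1]

lemma pos_and_mem_Ioo_of_incrementExcess_pos (hK : 0 ≤ K) (hε : 0 ≤ ε)
    (hper : Function.Periodic (u t) c) (h₀ : OneSidedLipschitz K (u 0)) (ht : 0 ≤ t)
    (hh : h ∈ Icc 0 c) (hpos : 0 < incrementExcess u K ε ((t, h), x)) :
    0 < t ∧ h ∈ Ioo 0 c := by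
  have hKh : 0 ≤ K * h := mul_nonneg hK hh.1
  have hεt : 0 ≤ ε * t := mul_nonneg hε ht
  simp only [incrementExcess] at hpos
  refine ⟨ht.lt_of_ne ?_, hh.1.lt_of_ne ?_, hh.2.lt_of_ne ?_⟩
  · rintro rfl
    have hinit : u 0 (x + h) - u 0 x ≤ K * h := by simpa using h₀ (le_add_of_nonneg_right hh.1)
    linarith
  · rintro rfl
    rw [add_zero] at hpos
    linarith
  · rintro rfl
    rw [hper] at hpos
    linarith

section MaximumPoint

variable (hmax : IsMaxOn (incrementExcess u K ε) ((Icc 0 T ×ˢ Icc 0 c) ×ˢ univ) ((t, h), x))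
  (ht : t ∈ Icc 0 T)

include hmax ht

lemma isLocalMax_sub_linear_of_isMaxOn_incrementExcess (hh : h ∈ Ioo 0 c) :
    IsLocalMax (fun y => u t y - K * y) (x + h) := by
  filter_upwards [Ioo_mem_nhds (show x < x + h by linarith [hh.1])
    (show x + h < x + c by linarith [hh.2])] with y hy
  have hle := hmax (show ((t, y - x), x) ∈ (Icc 0 T ×ˢ Icc 0 c) ×ˢ univ from
    ⟨⟨ht, by linarith [hy.1], by linarith [hy.2]⟩, mem_univ _⟩)
  simp only [incrementExcess, mem_ofPred_eq, add_sub_cancel] at hle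
  linarith

lemma isLocalMin_sub_linear_of_isMaxOn_incrementExcess (hh : h ∈ Ioo 0 c) :
    IsLocalMin (fun y => u t y - K * y) x := by
  filter_upwards [Ioo_mem_nhds (show x + h - c < x by linarith [hh.2])
    (show x < x + h by linarith [hh.1])] with y hy
  have hle := hmax (show ((t, x + h - y), y) ∈ (Icc 0 T ×ˢ Icc 0 c) ×ˢ univ from
    ⟨⟨ht, by linarith [hy.2], by linarith [hy.1]⟩, mem_univ _⟩)
  simp only [incrementExcess, mem_ofPred_eq, add_sub_cancel] at hle
  linarith

lemma le_deriv_time_sub_of_isMaxOn_incrementExcess (ht₀ : 0 < t) (hh : h ∈ Icc 0 c)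
    (hx : DifferentiableAt ℝ (fun s => u s x) t)
    (hxh : DifferentiableAt ℝ (fun s => u s (x + h)) t) :
    ε ≤ deriv (fun s => u s (x + h)) t - deriv (fun s => u s x) t := by
  have hderiv : HasDerivAt (fun s => incrementExcess u K ε ((s, h), x))
      (deriv (fun s => u s (x + h)) t - deriv (fun s => u s x) t - ε) t := by
    simpa [incrementExcess] using ((hxh.hasDerivAt.fun_sub hx.hasDerivAt).sub_const (K * h)).fun_sub
      ((hasDerivAt_id t).const_mul ε)
  have hlocal : IsLocalMaxOn (fun s => incrementExcess u K ε ((s, h), x)) (Iic t) t := by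
    filter_upwards [self_mem_nhdsWithin, mem_nhdsWithin_of_mem_nhds (Ioi_mem_nhds ht₀)]
      with s hst hs₀
    exact hmax ⟨⟨⟨le_of_lt hs₀, le_trans hst ht.2⟩, hh⟩, mem_univ _⟩
  exact sub_nonneg.1 (nonneg_of_hasDerivAt_of_isLocalMaxOn_Iic hderiv hlocal)

end MaximumPoint

end IncrementExcess

/-- `u` is a classical solution of `u_t + a(u) u_x = ν u_xx` on the half-plane `t > 0`,
continuous up to `t = 0`. For a conservation law with flux `f` the speed is `a = f'`. -/
structure IsAdvectionDiffusionSolution (a : ℝ → ℝ) (ν : ℝ) (u : ℝ → ℝ → ℝ) : Prop where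
  continuousOn : ContinuousOn (Function.uncurry u) (Ici (0 : ℝ) ×ˢ univ)
  contDiff_space : ∀ t, 0 < t → ContDiff ℝ 2 (u t)
  differentiableAt_time : ∀ t, 0 < t → ∀ x, DifferentiableAt ℝ (fun s => u s x) t
  pde : ∀ t, 0 < t → ∀ x,
    deriv (fun s => u s x) t + a (u t x) * deriv (u t) x = ν * deriv (deriv (u t)) x

namespace IsAdvectionDiffusionSolution

variable {a : ℝ → ℝ} {ν c K ε t h x : ℝ} {u : ℝ → ℝ → ℝ}

lemma deriv_time_le_of_isLocalMin_of_isLocalMax (hu : IsAdvectionDiffusionSolution a ν u)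
    (ha : Monotone a) (hν : 0 ≤ ν) (hK : 0 ≤ K) (ht : 0 < t) {y : ℝ} (hxy : u t x ≤ u t y)
    (hx : IsLocalMin (fun z => u t z - K * z) x) (hy : IsLocalMax (fun z => u t z - K * z) y) :
    deriv (fun s => u s y) t ≤ deriv (fun s => u s x) t := by
  have hdiff : Differentiable ℝ (u t) := (hu.contDiff_space t ht).differentiable (by norm_num)
  obtain ⟨hx₁, hx₂⟩ := deriv_eq_and_deriv_deriv_nonneg_of_isLocalMin_sub_linear hdiff hx
  obtain ⟨hy₁, hy₂⟩ := deriv_eq_and_deriv_deriv_nonpos_of_isLocalMax_sub_linear hdiff hy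
  have hspeed : a (u t x) * K ≤ a (u t y) * K := mul_le_mul_of_nonneg_right (ha hxy) hK
  have hdiffusion : ν * deriv (deriv (u t)) y ≤ ν * deriv (deriv (u t)) x :=
    mul_le_mul_of_nonneg_left (hy₂.trans hx₂) hν
  have hpdex := hu.pde t ht x
  have hpdey := hu.pde t ht y
  rw [hx₁] at hpdex
  rw [hy₁] at hpdey
  linarith

lemma incrementExcess_nonpos (hu : IsAdvectionDiffusionSolution a ν u) (ha : Monotone a)
    (hν : 0 ≤ ν) (hc : 0 < c) (hper : ∀ t, 0 ≤ t → Function.Periodic (u t) c)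
    (h₀ : OneSidedLipschitz K (u 0)) (hε : 0 < ε) (ht : 0 ≤ t) (hh : h ∈ Icc 0 c) (x : ℝ) :
    incrementExcess u K ε ((t, h), x) ≤ 0 := by
  have hK : 0 ≤ K := h₀.nonneg_of_periodic hc (hper 0 le_rfl)
  obtain ⟨⟨⟨s, k⟩, y⟩, ⟨⟨hs, hk⟩, -⟩, hmax⟩ :=
    exists_isMaxOn_incrementExcess (K := K) (ε := ε) hu.continuousOn ht hc hper
  refine (hmax ⟨⟨right_mem_Icc.2 ht, hh⟩, mem_univ x⟩).trans ?_
  by_contra! hpos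
  obtain ⟨hs₀, hk'⟩ :=
    pos_and_mem_Ioo_of_incrementExcess_pos hK hε.le (hper s hs.1) h₀ hs.1 hk hpos
  have hincr : u s y ≤ u s (y + k) := by
    simp only [incrementExcess] at hpos
    linarith [mul_nonneg hK hk.1, mul_nonneg hε.le hs.1]
  have htime := hu.deriv_time_le_of_isLocalMin_of_isLocalMax ha hν hK hs₀ hincr
    (isLocalMin_sub_linear_of_isMaxOn_incrementExcess hmax hs hk')
    (isLocalMax_sub_linear_of_isMaxOn_incrementExcess hmax hs hk')
  linarith [le_deriv_time_sub_of_isMaxOn_incrementExcess hmax hs hs₀ hk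
    (hu.differentiableAt_time s hs₀ y) (hu.differentiableAt_time s hs₀ (y + k))]

theorem oneSidedLipschitz (hu : IsAdvectionDiffusionSolution a ν u) (ha : Monotone a)
    (hν : 0 ≤ ν) (hc : 0 < c) (hper : ∀ t, 0 ≤ t → Function.Periodic (u t) c)
    (h₀ : OneSidedLipschitz K (u 0)) (ht : 0 ≤ t) : OneSidedLipschitz K (u t) := by
  rcases ht.eq_or_lt with rfl | ht₀
  · exact h₀
  refine .of_increment_le_of_periodic (h₀.nonneg_of_periodic hc (hper 0 le_rfl)) hc (hper t ht)
    fun x h hh => le_of_forall_pos_le_add fun δ hδ => ?_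
  have hexcess := hu.incrementExcess_nonpos ha hν hc hper h₀ (div_pos hδ ht₀) ht hh x
  simp only [incrementExcess, div_mul_cancel₀ _ ht₀.ne'] at hexcess
  linarith

end IsAdvectionDiffusionSolution

/-! ### Structure functions -/

section StructFun

variable {K p ℓ T₁ T₂ : ℝ} {u : ℝ → ℝ → ℝ}

lemma structFun_le_of_forall_integral_le {B : ℝ} (hT : T₁ < T₂)
    (h : ∀ t ∈ Ioc T₁ T₂, ∫ x in Ioc (0 : ℝ) 1, |u t (x + ℓ) - u t x| ^ p ≤ B) :
    structFun T₁ T₂ u p ℓ ≤ B :=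
  timeAvg_le_of_norm_le hT fun t ht =>
    (Real.norm_of_nonneg (integral_nonneg fun _ => Real.rpow_nonneg (abs_nonneg _) p)).trans_le
      (h t ht)

lemma structFun_le_of_le_one (hT : T₁ < T₂) (hper : ∀ t ∈ Ioc T₁ T₂, Function.Periodic (u t) 1)
    (hu : ∀ t ∈ Ioc T₁ T₂, OneSidedLipschitz K (u t)) (hℓ : 0 ≤ ℓ) (hp₀ : 0 ≤ p) (hp₁ : p ≤ 1) :
    structFun T₁ T₂ u p ℓ ≤ (2 * K * ℓ) ^ p :=
  structFun_le_of_forall_integral_le hT fun t ht =>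
    (hu t ht).integral_abs_increment_rpow_le_of_le_one (hper t ht) hℓ hp₀ hp₁

lemma structFun_le_of_one_le (hT : T₁ < T₂) (hper : ∀ t ∈ Ioc T₁ T₂, Function.Periodic (u t) 1)
    (hu : ∀ t ∈ Ioc T₁ T₂, OneSidedLipschitz K (u t)) (hℓ : 0 ≤ ℓ) (hp : 1 ≤ p) :
    structFun T₁ T₂ u p ℓ ≤ 2 * K ^ p * ℓ :=
  structFun_le_of_forall_integral_le hT fun t ht =>
    (hu t ht).integral_abs_increment_rpow_le_of_one_le (hper t ht) hℓ hp

end StructFun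

theorem statement14_general (K p : ℝ) (hp : 0 ≤ p) :
    ∃ C > 0, ∀ (a : ℝ → ℝ) (ν : ℝ) (u : ℝ → ℝ → ℝ), Monotone a → 0 ≤ ν →
      IsAdvectionDiffusionSolution a ν u → (∀ t, 0 ≤ t → Function.Periodic (u t) 1) →
      OneSidedLipschitz K (u 0) → ∀ T₁ T₂, 0 ≤ T₁ → T₁ < T₂ → ∀ ℓ, 0 ≤ ℓ →
        (p ≤ 1 → structFun T₁ T₂ u p ℓ ≤ C * ℓ ^ p) ∧
        (1 ≤ p → structFun T₁ T₂ u p ℓ ≤ C * ℓ) := by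
  refine ⟨max 1 (max ((2 * K) ^ p) (2 * K ^ p)), by positivity, ?_⟩
  intro a ν u ha hν hu hper h₀ T₁ T₂ hT₁ hT ℓ hℓ
  have hK : 0 ≤ K := h₀.nonneg_of_periodic one_pos (hper 0 le_rfl)
  have htime {t : ℝ} (ht : t ∈ Ioc T₁ T₂) : 0 ≤ t := hT₁.trans ht.1.le
  have hosl (t : ℝ) (ht : t ∈ Ioc T₁ T₂) : OneSidedLipschitz K (u t) :=
    hu.oneSidedLipschitz ha hν one_pos hper h₀ (htime ht)
  refine ⟨fun hp₁ => ?_, fun hp₁ => ?_⟩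
  · calc structFun T₁ T₂ u p ℓ ≤ (2 * K * ℓ) ^ p :=
          structFun_le_of_le_one hT (fun t ht => hper t (htime ht)) hosl hℓ hp hp₁
      _ = (2 * K) ^ p * ℓ ^ p := Real.mul_rpow (by positivity) hℓ
      _ ≤ _ := by gcongr; simp
  · calc structFun T₁ T₂ u p ℓ ≤ 2 * K ^ p * ℓ :=
          structFun_le_of_one_le hT (fun t ht => hper t (htime ht)) hosl hℓ hp₁
      _ ≤ _ := by gcongr; simp

/-! ### The generalised Burgers equation -/

namespace IsBurgersSolution

variable {f : ℝ → ℝ} {σ ν t : ℝ} {u : ℝ → ℝ → ℝ}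

lemma contDiff_space (hu : IsBurgersSolution f σ ν u) (ht : 0 ≤ t) :
    ContDiff ℝ (⊤ : ℕ∞) (u t) :=
  contDiffOn_univ.1 <| hu.hu.comp (f := fun x : ℝ => (t, x))
    (contDiff_prodMk_right t).contDiffOn fun _ _ => ⟨ht, mem_univ _⟩

lemma differentiableAt_time (hu : IsBurgersSolution f σ ν u) (ht : 0 < t) (x : ℝ) :
    DifferentiableAt ℝ (fun s => u s x) t :=
  ((hu.hu.contDiffAt (prod_mem_nhds (Ici_mem_nhds ht) univ_mem)).differentiableAt
    (by simp)).comp (f := fun s : ℝ => (s, x)) t (by fun_prop)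

lemma isAdvectionDiffusionSolution (hu : IsBurgersSolution f σ ν u) :
    IsAdvectionDiffusionSolution (deriv f) ν u where
  continuousOn := hu.hu.continuousOn
  contDiff_space _ ht := contDiff_infty.1 (hu.contDiff_space ht.le) 2
  differentiableAt_time _ ht := hu.differentiableAt_time ht
  pde t ht x := sub_eq_zero.1 (hu.hpde t ht x)

lemma monotone_deriv_flux (hu : IsBurgersSolution f σ ν u) : Monotone (deriv f) := by
  refine monotone_of_deriv_nonneg ((contDiff_infty_iff_deriv.1 hu.hf).2.differentiable (by simp))
    fun y => hu.hσ.le.trans ?_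
  simpa only [iteratedDeriv_succ, iteratedDeriv_zero] using hu.hconv y

lemma oneSidedLipschitz_init (hu : IsBurgersSolution f σ ν u) :
    OneSidedLipschitz (burgersD u) (u 0) := by
  have hsmooth := hu.contDiff_space le_rfl
  have hper : Function.Periodic (deriv (u 0)) 1 := fun x => by
    rw [← deriv_comp_add_const, funext (hu.hper 0)]
  refine .of_deriv_le (hsmooth.differentiable (by simp)) fun x => ?_
  calc deriv (u 0) x ≤ ‖deriv (u 0) x‖ := Real.le_norm_self _
    _ ≤ sobLp 1 ⊤ (u 0) := by
        simpa only [sobLp, iteratedDeriv_one] using norm_le_toReal_eLpNorm_top_of_periodic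
          (hsmooth.continuous_deriv (by simp)) one_pos hper x
    _ ≤ burgersD u := le_max_right _ _

lemma burgersD_pos (hu : IsBurgersSolution f σ ν u) : 0 < burgersD u := by
  -- Otherwise `u 0` would be constant, hence zero because its mean vanishes.
  by_contra! hD
  obtain ⟨x, hx⟩ := hu.hinit
  have hconst (y : ℝ) : u 0 y = u 0 x := by
    have hosc := hu.oneSidedLipschitz_init.abs_sub_le_of_periodic one_pos (hu.hper 0) x y
    rw [mul_one] at hosc
    exact sub_eq_zero.1 (abs_nonpos_iff.1 (hosc.trans hD))
  exact hx (by simpa [hconst] using hu.hmean 0 le_rfl)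

end IsBurgersSolution

lemma burgersT₁_pos {D Ct : ℝ} (hD : 0 < D) (hCt : 0 < Ct) : 0 < burgersT₁ D Ct := by
  unfold burgersT₁
  positivity

lemma burgersT₁_lt_burgersT₂ {D Ct : ℝ} (hD : 0 < D) (hCt : 0 < Ct) (σ : ℝ) :
    burgersT₁ D Ct < burgersT₂ σ D Ct :=
  lt_max_of_lt_left (by linarith [burgersT₁_pos hD hCt])

/-- For every `p ≥ 0` there are `C > 0` and `C₁ > 0` depending
only on `f`, `D`, `p` such that for every `ν ∈ (0,1]` and every `ℓ ∈ (C₁ν, 1]`,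
`S_p(ℓ) ≤ C ℓ^p` if `0 ≤ p ≤ 1`, and `S_p(ℓ) ≤ C ℓ` if `p ≥ 1`. -/
theorem statement14 (f : ℝ → ℝ) (σ D Ct : ℝ) (hCt : 0 < Ct)
    (hCtb : ∀ ν, 0 < ν → ν ≤ 1 →
      ∀ u : ℝ → ℝ → ℝ, IsBurgersSolution f σ ν u → burgersD u = D →
        ∀ t, 0 ≤ t → sobLp 1 2 (u t) ^ 2 ≤ Ct * ν⁻¹)
    (p : ℝ) (hp : 0 ≤ p) :
    ∃ C > 0, ∃ C₁ > 0, ∀ ν, 0 < ν → ν ≤ 1 →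
      ∀ u : ℝ → ℝ → ℝ, IsBurgersSolution f σ ν u → burgersD u = D →
        ∀ ℓ, C₁ * ν < ℓ → ℓ ≤ 1 →
          (p ≤ 1 →
            structFun (burgersT₁ D Ct) (burgersT₂ σ D Ct) u p ℓ ≤ C * ℓ ^ p) ∧
          (1 ≤ p →
            structFun (burgersT₁ D Ct) (burgersT₂ σ D Ct) u p ℓ ≤ C * ℓ) := by
  obtain ⟨C, hC, hbound⟩ := statement14_general D p hp
  refine ⟨C, hC, 1, one_pos, fun ν hν _ u hu huD ℓ hℓ _ => ?_⟩
  have hD : 0 < D := huD ▸ hu.burgersD_pos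
  exact hbound (deriv f) ν u hu.monotone_deriv_flux hν.le hu.isAdvectionDiffusionSolution
    (fun t _ => hu.hper t) (huD ▸ hu.oneSidedLipschitz_init) _ _ (burgersT₁_pos hD hCt).le
    (burgersT₁_lt_burgersT₂ hD hCt σ) ℓ (by linarith)
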